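/- For all r ∈ (0,1), one has the Landen-type identity E(2√r/(1+r)) = (2E(r) − (1−r²)K(r))/(1+r). -/

import Mathlib

/-!
The proof is Landen's substitution `u = (θ + arcsin (r sin θ)) / 2`, which maps `[0, π]` onto
`[0, π / 2]`. With `Δ = √(1 - r² sin² θ)` and `k = 2 √r / (1 + r)` one has
`(1 + r) √(1 - k² sin² u) = Δ + r cos θ` (`landen_integrand`), while
`du/dθ = (Δ + r cos θ) / (2 Δ)` (`hasDerivAt_landen`). Hence
`(1 + r) E(k) = ∫₀^π (Δ + r cos θ)² / (2 Δ) dθ`, and since `r² cos² θ = Δ² - (1 - r²)` the integrand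
equals `Δ - (1 - r²) / (2 Δ) + r cos θ`. The cosine term integrates to zero, and by the symmetry
`θ ↦ π - θ` the remaining terms give `2 E(r) - (1 - r²) K(r)`.
-/

open Real

/-- The complete elliptic integral of the first kind. -/
noncomputable def ellipticK (r : ℝ) : ℝ :=
  ∫ θ in (0 : ℝ)..(π / 2), (Real.sqrt (1 - r ^ 2 * sin θ ^ 2))⁻¹

/-- The complete elliptic integral of the second kind. -/
noncomputable def ellipticE (r : ℝ) : ℝ :=
  ∫ θ in (0 : ℝ)..(π / 2), Real.sqrt (1 - r ^ 2 * sin θ ^ 2)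

lemma one_sub_sq_mul_sin_sq_pos {r : ℝ} (hr : r ∈ Set.Ioo (0 : ℝ) 1) (θ : ℝ) :
    0 < 1 - r ^ 2 * sin θ ^ 2 := by
  obtain ⟨h0, h1⟩ := hr
  nlinarith [sin_sq_le_one θ, sq_nonneg (sin θ), mul_pos h0 (sub_pos.2 h1)]

/-- Landen's substitution. -/
noncomputable def landen (r θ : ℝ) : ℝ := (θ + arcsin (r * sin θ)) / 2

lemma hasDerivAt_landen {r : ℝ} (hr : r ∈ Set.Ioo (0 : ℝ) 1) (θ : ℝ) :
    HasDerivAt (landen r)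
      ((1 + r * cos θ * (√(1 - r ^ 2 * sin θ ^ 2))⁻¹) / 2) θ := by
  have hpos := one_sub_sq_mul_sin_sq_pos hr θ
  have h1 : r * sin θ ≠ -1 := fun h => by
    have : (r * sin θ) ^ 2 = 1 := by rw [h]; norm_num
    nlinarith
  have h2 : r * sin θ ≠ 1 := fun h => by
    have : (r * sin θ) ^ 2 = 1 := by rw [h]; norm_num
    nlinarith
  have h := (((hasDerivAt_id θ).add
    ((hasDerivAt_arcsin h1 h2).comp θ ((hasDerivAt_sin θ).const_mul r))).div_const 2)
  refine h.congr_deriv ?_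
  rw [mul_pow]
  ring

lemma landen_integrand {r : ℝ} (hr : r ∈ Set.Ioo (0 : ℝ) 1) (θ : ℝ) :
    √(1 - (2 * √r / (1 + r)) ^ 2 * sin (landen r θ) ^ 2)
      = (√(1 - r ^ 2 * sin θ ^ 2) + r * cos θ) / (1 + r) := by
  have hpos := one_sub_sq_mul_sin_sq_pos hr θ
  obtain ⟨h0, h1⟩ := hr
  have hsq := Real.sq_sqrt hpos.le
  have hcos : cos (2 * landen r θ)
      = cos θ * √(1 - r ^ 2 * sin θ ^ 2) - r * sin θ ^ 2 := by
    have hlo : -1 ≤ r * sin θ := by nlinarith [neg_one_le_sin θ]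
    have hhi : r * sin θ ≤ 1 := by nlinarith [sin_le_one θ]
    rw [landen, mul_div_cancel₀ _ (two_ne_zero), cos_add, cos_arcsin, sin_arcsin hlo hhi, mul_pow]
    ring
  have hsin : sin (landen r θ) ^ 2 = (1 - cos (2 * landen r θ)) / 2 := by
    rw [cos_two_mul, cos_sq']; ring
  -- `|r cos θ| ≤ Δ`, so the square root of the perfect square below has the right sign
  have hnn : 0 ≤ √(1 - r ^ 2 * sin θ ^ 2) + r * cos θ := by
    have : |r * cos θ| ≤ √(1 - r ^ 2 * sin θ ^ 2) := by
      apply Real.abs_le_sqrt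
      rw [mul_pow, cos_sq']
      nlinarith
    linarith [neg_abs_le (r * cos θ)]
  rw [← Real.sqrt_sq (div_nonneg hnn (by linarith : (0 : ℝ) ≤ 1 + r))]
  congr 1
  have hr1 : (1 + r) ≠ 0 := by linarith
  rw [hsin, hcos, div_pow, mul_pow, Real.sq_sqrt h0.le]
  field_simp
  linear_combination -hsq - r ^ 2 * cos_sq' θ

lemma integral_zero_pi_of_symm {f : ℝ → ℝ} (hf : Continuous f) (hs : ∀ x, f (π - x) = f x) :
    ∫ θ in (0 : ℝ)..π, f θ = 2 * ∫ θ in (0 : ℝ)..(π / 2), f θ := by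
  have h : ∫ θ in (π / 2)..π, f θ = ∫ θ in (0 : ℝ)..(π / 2), f θ := by
    have := intervalIntegral.integral_comp_sub_left (a := 0) (b := π / 2) f π
    simp only [hs, sub_zero, sub_half] at this
    exact this.symm
  rw [← intervalIntegral.integral_add_adjacent_intervals (hf.intervalIntegrable 0 (π / 2))
    (hf.intervalIntegrable (π / 2) π), h]
  ring

theorem stmt13 (r : ℝ) (hr : r ∈ Set.Ioo (0 : ℝ) 1) :
    ellipticE (2 * Real.sqrt r / (1 + r))
      = (2 * ellipticE r - (1 - r ^ 2) * ellipticK r) / (1 + r) := by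
  have hr1 : (1 + r) ≠ 0 := by linarith [hr.1]
  have hD : Continuous fun θ => √(1 - r ^ 2 * sin θ ^ 2) := by fun_prop
  have hDpos : ∀ θ, 0 < √(1 - r ^ 2 * sin θ ^ 2) := fun θ =>
    Real.sqrt_pos.2 (one_sub_sq_mul_sin_sq_pos hr θ)
  have hDinv : Continuous fun θ => (√(1 - r ^ 2 * sin θ ^ 2))⁻¹ :=
    hD.inv₀ fun θ => (hDpos θ).ne'
  have hE := integral_zero_pi_of_symm hD (by simp [sin_pi_sub])
  have hK := integral_zero_pi_of_symm hDinv (by simp [sin_pi_sub])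
  have hsub := intervalIntegral.integral_comp_mul_deriv (a := 0) (b := π)
    (g := fun u => √(1 - (2 * √r / (1 + r)) ^ 2 * sin u ^ 2))
    (fun θ _ => hasDerivAt_landen hr θ) (by fun_prop) (by fun_prop)
  have ha : landen r 0 = 0 := by simp [landen]
  have hb : landen r π = π / 2 := by simp [landen]
  rw [ha, hb] at hsub
  rw [ellipticE, ← hsub]
  have hint : ∀ θ, ((fun u => √(1 - (2 * √r / (1 + r)) ^ 2 * sin u ^ 2)) ∘ landen r) θ
        * ((1 + r * cos θ * (√(1 - r ^ 2 * sin θ ^ 2))⁻¹) / 2)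
      = (1 + r)⁻¹ * (√(1 - r ^ 2 * sin θ ^ 2)
          - (1 - r ^ 2) / 2 * (√(1 - r ^ 2 * sin θ ^ 2))⁻¹ + r * cos θ) := by
    intro θ
    have hsq := Real.sq_sqrt (one_sub_sq_mul_sin_sq_pos hr θ).le
    have hne := (hDpos θ).ne'
    have hc := cos_sq' θ
    rw [Function.comp_apply, landen_integrand hr]
    generalize √(1 - r ^ 2 * sin θ ^ 2) = D at *
    field_simp
    linear_combination r ^ 2 * hc - hsq
  simp_rw [hint]
  rw [intervalIntegral.integral_const_mul, intervalIntegral.integral_add,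
    intervalIntegral.integral_sub, intervalIntegral.integral_const_mul,
    intervalIntegral.integral_const_mul, hE, hK, integral_cos, ← ellipticE, ← ellipticK]
  · simp only [sin_pi, sin_zero]
    field_simp
    ring
  all_goals exact Continuous.intervalIntegrable (by fun_prop) _ _
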